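/- Let s : ℝ → (n×n real symmetric matrices) solve ∂s = c + d·s - s·(a + b·s), where b, c are symmetric and a = -d^T. Define u := (I - i·s)(I + i·s)^{-1}. Then u solves ∂u = C + D·u - u·(D̄ + C̄·u), where C := ½(a - d - i(b + c)), D := ½(a + d + i(b - c)), and bar denotes entrywise complex conjugation. -/

import Mathlib

open Matrix

attribute [local instance] Matrix.frobeniusNormedAddCommGroup Matrix.frobeniusNormedSpace

/-- Complexification of a real matrix. -/
def mc {n : ℕ} (a : Matrix (Fin n) (Fin n) ℝ) : Matrix (Fin n) (Fin n) ℂ :=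
  a.map Complex.ofReal

/-- `C = ½(a - d - i(b+c))`. -/
noncomputable def Cmat {n : ℕ} (a b c d : Matrix (Fin n) (Fin n) ℝ) :
    Matrix (Fin n) (Fin n) ℂ :=
  (1 / 2 : ℂ) • (mc a - mc d - Complex.I • (mc b + mc c))

/-- `D = ½(a + d + i(b-c))`. -/
noncomputable def Dmat {n : ℕ} (a b c d : Matrix (Fin n) (Fin n) ℝ) :
    Matrix (Fin n) (Fin n) ℂ :=
  (1 / 2 : ℂ) • (mc a + mc d + Complex.I • (mc b - mc c))

/-- Entrywise complex conjugation. -/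
def mconj {n : ℕ} (M : Matrix (Fin n) (Fin n) ℂ) : Matrix (Fin n) (Fin n) ℂ :=
  M.map (starRingEnd ℂ)

attribute [local instance] Matrix.frobeniusNormedRing Matrix.frobeniusNormedAlgebra in
/-- The derivative of the inverse of a curve of complex matrices. -/
theorem HasDerivAt.matrix_inv {n : ℕ} {M : ℝ → Matrix (Fin n) (Fin n) ℂ}
    {M' : Matrix (Fin n) (Fin n) ℂ} {x : ℝ} (hM : HasDerivAt M M' x) (hu : IsUnit (M x)) :
    HasDerivAt (fun y => (M y)⁻¹) (-((M x)⁻¹ * M' * (M x)⁻¹)) x := by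
  obtain ⟨w, hw⟩ := hu
  have h := hasFDerivAt_ringInverse (𝕜 := ℝ) w
  rw [hw] at h
  have h2 := h.comp_hasDerivAt x hM
  have e : ((w⁻¹ : (Matrix (Fin n) (Fin n) ℂ)ˣ) : Matrix (Fin n) (Fin n) ℂ) = (M x)⁻¹ := by
    rw [← hw, Matrix.coe_units_inv]
  simp only [Function.comp_def, ← Matrix.nonsing_inv_eq_ringInverse, e,
    ContinuousLinearMap.neg_apply, ContinuousLinearMap.mulLeftRight_apply] at h2
  exact h2

attribute [local instance] Matrix.frobeniusNormedRing Matrix.frobeniusNormedAlgebra in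
/-- The derivative of the Cayley transform `(1 - N) * (1 + N)⁻¹` of a curve of matrices. -/
theorem HasDerivAt.cayley {n : ℕ} {N : ℝ → Matrix (Fin n) (Fin n) ℂ}
    {N' : Matrix (Fin n) (Fin n) ℂ} {x : ℝ} (hN : HasDerivAt N N' x) (hu : IsUnit (1 + N x)) :
    HasDerivAt (fun y => (1 - N y) * (1 + N y)⁻¹)
      (-N' * (1 + N x)⁻¹ + (1 - N x) * -((1 + N x)⁻¹ * N' * (1 + N x)⁻¹)) x :=
  (hN.const_sub 1).mul ((hN.const_add 1).matrix_inv hu)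

theorem hasDerivAt_mc {n : ℕ} {s : ℝ → Matrix (Fin n) (Fin n) ℝ}
    {s' : Matrix (Fin n) (Fin n) ℝ} {x : ℝ} (hs : HasDerivAt s s' x) :
    HasDerivAt (fun y => mc (s y)) (mc s') x :=
  (LinearMap.toContinuousLinearMap
    (Complex.ofRealCLM.toLinearMap.mapMatrix (m := Fin n) (n := Fin n))).hasFDerivAt.comp_hasDerivAt
      x hs

theorem mc_add {n : ℕ} (a b : Matrix (Fin n) (Fin n) ℝ) : mc (a + b) = mc a + mc b := by
  ext; simp [mc]

theorem mc_sub {n : ℕ} (a b : Matrix (Fin n) (Fin n) ℝ) : mc (a - b) = mc a - mc b := by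
  ext; simp [mc]

theorem mc_mul {n : ℕ} (a b : Matrix (Fin n) (Fin n) ℝ) : mc (a * b) = mc a * mc b := by
  ext; simp [mc, Matrix.mul_apply]

theorem mconj_Cmat {n : ℕ} (a b c d : Matrix (Fin n) (Fin n) ℝ) :
    mconj (Cmat a b c d) = (1 / 2 : ℂ) • (mc a - mc d + Complex.I • (mc b + mc c)) := by
  ext; simp [mconj, Cmat, mc, map_ofNat]; ring

theorem mconj_Dmat {n : ℕ} (a b c d : Matrix (Fin n) (Fin n) ℝ) :
    mconj (Dmat a b c d) = (1 / 2 : ℂ) • (mc a + mc d - Complex.I • (mc b - mc c)) := by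
  ext; simp [mconj, Dmat, mc, map_ofNat]; ring

theorem isUnit_one_add_I_smul_mc {n : ℕ} {s : Matrix (Fin n) (Fin n) ℝ} (hs : sᵀ = s) :
    IsUnit (1 + Complex.I • mc s) := by
  have hp : (1 + sᴴ * s).PosDef :=
    Matrix.PosDef.one.add_posSemidef (Matrix.posSemidef_conjTranspose_mul_self s)
  have h : IsUnit (mc (1 + sᴴ * s)) := hp.isUnit.map (Complex.ofRealHom.mapMatrix (m := Fin n))
  have e : (1 + Complex.I • mc s) * (1 - Complex.I • mc s) = mc (1 + sᴴ * s) := by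
    have h1 : mc (1 : Matrix (Fin n) (Fin n) ℝ) = 1 := by simp [mc]
    rw [Matrix.conjTranspose_eq_transpose_of_trivial, hs, mc_add, mc_mul, h1]
    simp only [mul_sub, add_mul, mul_one, one_mul, smul_mul_smul_comm, Complex.I_mul_I]
    module
  rw [← e, Matrix.isUnit_iff_isUnit_det, Matrix.det_mul] at h
  exact (Matrix.isUnit_iff_isUnit_det _).2 (isUnit_of_mul_isUnit_left h)

/-- The right-hand side of the Riccati equation for the Cayley transform, where `V` is the inverse
of `1 + i s`. -/
theorem cayley_riccati_identity {n : ℕ} (a b c d s V : Matrix (Fin n) (Fin n) ℂ)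
    (hl : V * (1 + Complex.I • s) = 1) (hr : (1 + Complex.I • s) * V = 1) :
    -(Complex.I • (c + d * s - s * (a + b * s))) * V
        + (1 - Complex.I • s) * -(V * (Complex.I • (c + d * s - s * (a + b * s))) * V) =
      (1 / 2 : ℂ) • (a - d - Complex.I • (b + c))
        + (1 / 2 : ℂ) • (a + d + Complex.I • (b - c)) * ((1 - Complex.I • s) * V)
        - ((1 - Complex.I • s) * V) * ((1 / 2 : ℂ) • (a + d - Complex.I • (b - c))
          + (1 / 2 : ℂ) • (a - d + Complex.I • (b + c)) * ((1 - Complex.I • s) * V)) := by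
  have hl' : Complex.I • (V * s) = 1 - V := by
    rw [← hl]; simp [mul_add]
  have hr' : Complex.I • (s * V) = 1 - V := by
    rw [← hr]; simp [add_mul]
  have hu : (1 - Complex.I • s) * V = (2 : ℂ) • V - 1 := by
    rw [sub_mul, one_mul, smul_mul_assoc, hr']; module
  have hsV : s * V = -Complex.I • (1 - V) := by
    rw [← hr', smul_smul]; simp
  have hVs : V * s = -Complex.I • (1 - V) := by
    rw [← hl', smul_smul]; simp
  have hVs' (X : Matrix (Fin n) (Fin n) ℂ) : V * (s * X) = -Complex.I • (X - V * X) := by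
    rw [← mul_assoc, hVs, smul_mul_assoc, sub_mul, one_mul]
  have hd : -(Complex.I • (c + d * s - s * (a + b * s))) * V
      + (1 - Complex.I • s) * -(V * (Complex.I • (c + d * s - s * (a + b * s))) * V) =
      (-2 * Complex.I) • (V * (c + d * s - s * (a + b * s)) * V) := by
    rw [mul_neg, ← mul_assoc, ← mul_assoc, hu]
    simp only [sub_mul, smul_mul_assoc, mul_smul_comm, one_mul, neg_mul]
    module
  rw [hd, hu]
  simp only [mul_add, add_mul, mul_sub, sub_mul, smul_mul_assoc, mul_smul_comm, mul_assoc, hsV,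
    hVs', mul_one, one_mul, smul_add, smul_sub, smul_smul]
  match_scalars <;> ring_nf <;> simp [Complex.I_sq, Complex.I_pow_three]

theorem cayley_riccati_flow {n : ℕ}
    (a b c d : ℝ → Matrix (Fin n) (Fin n) ℝ)
    (ha : Continuous a) (hb : Continuous b) (hc : Continuous c) (hd : Continuous d)
    (hbs : ∀ x, (b x)ᵀ = b x) (hcs : ∀ x, (c x)ᵀ = c x) (had : ∀ x, a x = -(d x)ᵀ)
    (s : ℝ → Matrix (Fin n) (Fin n) ℝ) (hssym : ∀ x, (s x)ᵀ = s x)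
    (hs : ∀ x, HasDerivAt s (c x + d x * s x - s x * (a x + b x * s x)) x) :
    ∀ x, HasDerivAt
      (fun x => (1 - Complex.I • mc (s x)) * (1 + Complex.I • mc (s x))⁻¹)
      (Cmat (a x) (b x) (c x) (d x)
        + Dmat (a x) (b x) (c x) (d x)
          * ((1 - Complex.I • mc (s x)) * (1 + Complex.I • mc (s x))⁻¹)
        - ((1 - Complex.I • mc (s x)) * (1 + Complex.I • mc (s x))⁻¹)
          * (mconj (Dmat (a x) (b x) (c x) (d x))
            + mconj (Cmat (a x) (b x) (c x) (d x))
              * ((1 - Complex.I • mc (s x)) * (1 + Complex.I • mc (s x))⁻¹))) x := by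
  intro x
  have hu := isUnit_one_add_I_smul_mc (hssym x)
  have hdet := (Matrix.isUnit_iff_isUnit_det _).1 hu
  refine (((hasDerivAt_mc (hs x)).const_smul Complex.I).cayley hu).congr_deriv ?_
  rw [mconj_Cmat, mconj_Dmat, mc_sub, mc_add, mc_mul, mc_mul, mc_add, mc_mul, Cmat, Dmat]
  exact cayley_riccati_identity _ _ _ _ _ _ (Matrix.nonsing_inv_mul _ hdet)
    (Matrix.mul_nonsing_inv _ hdet)
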